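/- Let γ[·] be a random specification on Ω = E^S such that 𝒢(γ[ξ]) ≠ ∅ for ℙ-almost every ξ. Then there exists a map π : H × Ω × ℱ → [0,1], (ξ,ω,A) ↦ π[ξ](A|ω), such that: (1) for every fixed A ∈ ℱ, the map (ξ,ω) ↦ π[ξ](A|ω) is measurable with respect to the σ-algebra ⋂_{Λ ⊆ S finite} (ℋ ⊗ ℱ_{Λᶜ}); and (2) for ℙ-almost every ξ, A ↦ π[ξ](A|ω) is a probability measure on (Ω,ℱ) for every ω ∈ Ω, and π[ξ] is a (𝒢(γ[ξ]),𝒯)-kernel. -/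

import Mathlib

open MeasureTheory Filter Topology
open scoped ENNReal NNReal

namespace GibbsMeta

variable {S E H : Type*}

/-- The sub-σ-algebra `ℱ_Δ` of the product σ-algebra on `Ω = E^S` generated by the
coordinate projections with indices in `Δ ⊆ S`. -/
def cylSigma (S E : Type*) [MeasurableSpace E] (Δ : Set S) : MeasurableSpace (S → E) :=
  ⨆ i ∈ Δ, MeasurableSpace.comap (fun ω : S → E => ω i) inferInstance

/-- The tail σ-algebra `𝒯 = ⋂_{Λ finite} ℱ_{Λᶜ}`. -/
def tailSigma (S E : Type*) [MeasurableSpace E] : MeasurableSpace (S → E) :=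
  ⨅ Λ : Finset S, cylSigma S E ((↑Λ : Set S)ᶜ)

/-- A specification: a family of proper, consistent probability kernels indexed by
finite volumes, with `γ_Λ(A|·)` being `ℱ_{Λᶜ}`-measurable. -/
structure IsSpecification [MeasurableSpace E]
    (γ : Finset S → (S → E) → Measure (S → E)) : Prop where
  prob : ∀ (Λ : Finset S) (ω : S → E), IsProbabilityMeasure (γ Λ ω)
  meas : ∀ (Λ : Finset S) (A : Set (S → E)), MeasurableSet A →
    Measurable[cylSigma S E ((↑Λ : Set S)ᶜ)] fun ω => γ Λ ω A
  proper : ∀ (Λ : Finset S) (A : Set (S → E)),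
    MeasurableSet[cylSigma S E ((↑Λ : Set S)ᶜ)] A →
    ∀ ω, γ Λ ω A = A.indicator (fun _ => (1 : ℝ≥0∞)) ω
  consistent : ∀ (Δ Λ : Finset S), Δ ⊆ Λ → ∀ (A : Set (S → E)), MeasurableSet A →
    ∀ ω, ∫⁻ σ, γ Δ σ A ∂(γ Λ ω) = γ Λ ω A

/-- The set `𝒢(γ)` of (probability) Gibbs measures for the specification `γ`,
i.e. solutions of the DLR equations. -/
def Gibbs [MeasurableSpace E] (γ : Finset S → (S → E) → Measure (S → E)) :
    Set (Measure (S → E)) :=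
  {μ | IsProbabilityMeasure μ ∧
    ∀ (Λ : Finset S) (A : Set (S → E)), MeasurableSet A → ∫⁻ ω, γ Λ ω A ∂μ = μ A}

/-- The set `ex 𝒢(γ)` of extreme points of the convex set `𝒢(γ)`. -/
def exGibbs [MeasurableSpace E] (γ : Finset S → (S → E) → Measure (S → E)) :
    Set (Measure (S → E)) :=
  {μ | μ ∈ Gibbs γ ∧ ∀ ν₁ ∈ Gibbs γ, ∀ ν₂ ∈ Gibbs γ, ∀ t : ℝ≥0∞, 0 < t → t < 1 →
    μ = t • ν₁ + (1 - t) • ν₂ → ν₁ = μ ∧ ν₂ = μ}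

/-- A random specification: a measurable family of specifications. -/
structure IsRandomSpecification [MeasurableSpace E] [MeasurableSpace H]
    (γ : H → Finset S → (S → E) → Measure (S → E)) : Prop where
  spec : ∀ ξ, IsSpecification (γ ξ)
  jointMeas : ∀ (Λ : Finset S) (A : Set (S → E)), MeasurableSet A →
    Measurable fun p : H × (S → E) => γ p.1 Λ p.2 A

/-- A `(𝒢(γ), 𝒯)`-kernel: a probability kernel `π`, `𝒯`-measurable in the boundary
condition, such that for every `μ ∈ 𝒢(γ)`, `π(A|·)` is a version of `μ(A | 𝒯)` and
`π(·|ω) ∈ 𝒢(γ)` for `μ`-a.e. `ω`, the latter event being tail measurable. -/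
structure IsGTKernel [MeasurableSpace E] (γ : Finset S → (S → E) → Measure (S → E))
    (π : (S → E) → Measure (S → E)) : Prop where
  prob : ∀ ω, IsProbabilityMeasure (π ω)
  tailMeas : ∀ A : Set (S → E), MeasurableSet A →
    Measurable[tailSigma S E] fun ω => π ω A
  condProb : ∀ μ ∈ Gibbs γ, ∀ A : Set (S → E), MeasurableSet A →
    ∀ B : Set (S → E), MeasurableSet[tailSigma S E] B →
      ∫⁻ ω in B, π ω A ∂μ = μ (A ∩ B)
  gibbsTailMeas : MeasurableSet[tailSigma S E] {ω | π ω ∈ Gibbs γ}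
  gibbsFull : ∀ μ ∈ Gibbs γ, μ {ω | π ω ∈ Gibbs γ} = 1

lemma cylSigma_le [MeasurableSpace E] (Δ : Set S) :
    cylSigma S E Δ ≤ (inferInstance : MeasurableSpace (S → E)) := by
  refine iSup₂_le fun i _ => ?_
  exact (measurable_pi_apply i).comap_le

lemma cylSigma_mono [MeasurableSpace E] {Δ Δ' : Set S} (h : Δ ⊆ Δ') :
    cylSigma S E Δ ≤ cylSigma S E Δ' :=
  biSup_mono fun _ hi => h hi

lemma cylSigma_compl_anti [MeasurableSpace E] {Λ Λ' : Finset S} (h : Λ ⊆ Λ') :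
    cylSigma S E ((↑Λ' : Set S)ᶜ) ≤ cylSigma S E ((↑Λ : Set S)ᶜ) :=
  cylSigma_mono (Set.compl_subset_compl.2 (by exact_mod_cast h))

lemma tailSigma_le_cyl [MeasurableSpace E] (Λ : Finset S) :
    tailSigma S E ≤ cylSigma S E ((↑Λ : Set S)ᶜ) := iInf_le _ Λ

lemma tailSigma_le [MeasurableSpace E] :
    tailSigma S E ≤ (inferInstance : MeasurableSpace (S → E)) :=
  (tailSigma_le_cyl ∅).trans (cylSigma_le _)

lemma measurable_iInf_iff' {α β ι : Type*} {m : ι → MeasurableSpace α} {mβ : MeasurableSpace β}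
    {f : α → β} : Measurable[⨅ i, m i] f ↔ ∀ i, Measurable[m i] f := by
  constructor
  · intro h i
    exact h.mono (iInf_le _ i) le_rfl
  · intro h s hs
    rw [MeasurableSpace.measurableSet_iInf]
    exact fun i => h i hs

open Classical in
/-- Overwrite the configuration inside `Λ` by `c`. -/
noncomputable def patch (c : S → E) (Λ : Finset S) (ω : S → E) : S → E :=
  fun i => if i ∈ Λ then c i else ω i

lemma patch_patch (c : S → E) (Λ : Finset S) (ω : S → E) :
    patch c Λ (patch c Λ ω) = patch c Λ ω := by
  funext i; unfold patch; split_ifs <;> rfl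

lemma measurable_patch [MeasurableSpace E] (c : S → E) (Λ : Finset S) :
    Measurable[cylSigma S E ((↑Λ : Set S)ᶜ)] (patch c Λ) := by
  refine @measurable_pi_lambda _ _ _ (cylSigma S E ((↑Λ : Set S)ᶜ)) _ _ fun i => ?_
  by_cases hi : i ∈ Λ
  · simp only [patch, hi, if_true]
    exact @measurable_const _ _ _ (cylSigma S E ((↑Λ : Set S)ᶜ)) _
  · simp only [patch, hi, if_false]
    rw [measurable_iff_comap_le]
    exact le_iSup₂_of_le i (by simpa using hi) le_rfl

lemma apply_patch [MeasurableSpace E] (c : S → E) (Λ : Finset S) {f : (S → E) → ℝ≥0∞}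
    (hf : Measurable[cylSigma S E ((↑Λ : Set S)ᶜ)] f) (ω : S → E) :
    f (patch c Λ ω) = f ω := by
  have hle : cylSigma S E ((↑Λ : Set S)ᶜ) ≤ MeasurableSpace.comap (patch c Λ) inferInstance := by
    refine iSup₂_le fun i hi => ?_
    have hi' : i ∉ Λ := by simpa using hi
    have : (fun ω : S → E => ω i) = (fun ω : S → E => ω i) ∘ patch c Λ := by
      funext ω; simp [patch, hi']
    rw [this, ← MeasurableSpace.comap_comp]
    exact MeasurableSpace.comap_mono (measurable_pi_apply i).comap_le
  have h := hle _ (hf (measurableSet_singleton (f ω)))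
  obtain ⟨T, -, hT⟩ := h
  have h1 : ω ∈ patch c Λ ⁻¹' T := by rw [hT]; rfl
  have h2 : patch c Λ ω ∈ patch c Λ ⁻¹' T := by
    change patch c Λ (patch c Λ ω) ∈ T
    rw [patch_patch]; exact h1
  rw [hT] at h2
  exact h2

lemma joint_cyl_meas [MeasurableSpace E] [mH : MeasurableSpace H] (c : S → E)
    {γ : H → Finset S → (S → E) → Measure (S → E)} (hγ : IsRandomSpecification γ)
    (Λ : Finset S) {A : Set (S → E)} (hA : MeasurableSet A) :
    Measurable[MeasurableSpace.prod mH (cylSigma S E ((↑Λ : Set S)ᶜ))]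
      fun p : H × (S → E) => γ p.1 Λ p.2 A := by
  have h : (fun p : H × (S → E) => γ p.1 Λ p.2 A)
      = (fun p : H × (S → E) => γ p.1 Λ p.2 A) ∘ fun p => (p.1, patch c Λ p.2) := by
    funext p
    exact (apply_patch c Λ ((hγ.spec p.1).meas Λ A hA) p.2).symm
  rw [h]
  refine (hγ.jointMeas Λ A hA).comp ?_
  refine Measurable.prodMk ?_ ?_
  · exact @measurable_fst _ _ mH (cylSigma S E ((↑Λ : Set S)ᶜ))
  · exact (measurable_patch c Λ).comp (@measurable_snd _ _ mH (cylSigma S E ((↑Λ : Set S)ᶜ)))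

lemma limsup_meas [MeasurableSpace E] [mH : MeasurableSpace H] (c : S → E)
    {γ : H → Finset S → (S → E) → Measure (S → E)} (hγ : IsRandomSpecification γ)
    {L : ℕ → Finset S} (hL : Tendsto L atTop atTop) {A : Set (S → E)} (hA : MeasurableSet A) :
    Measurable[⨅ Λ : Finset S, MeasurableSpace.prod mH (cylSigma S E ((↑Λ : Set S)ᶜ))]
      fun p : H × (S → E) => limsup (fun n => γ p.1 (L n) p.2 A) atTop := by
  rw [measurable_iInf_iff']
  intro Λ
  obtain ⟨N, hN⟩ := eventually_atTop.1 (hL.eventually_ge_atTop Λ)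
  have : (fun p : H × (S → E) => limsup (fun n => γ p.1 (L n) p.2 A) atTop)
      = fun p => limsup (fun n => γ p.1 (L (n + N)) p.2 A) atTop := by
    funext p
    exact (limsup_nat_add (fun n => γ p.1 (L n) p.2 A) N).symm
  rw [this]
  refine @Measurable.limsup _ _ (_) _ _ _ _ _ _ _ fun n => ?_
  refine (joint_cyl_meas c hγ (L (n + N)) hA).mono ?_ le_rfl
  exact sup_le_sup le_rfl
    (MeasurableSpace.comap_mono (cylSigma_compl_anti (hN _ (Nat.le_add_left N n))))

lemma generateFrom_rat {Ω : Type*} [mΩ : MeasurableSpace Ω] {e : Ω → ℝ}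
    (he : MeasurableEmbedding e) :
    mΩ = MeasurableSpace.generateFrom (Set.preimage e '' ⋃ a : ℚ, {Set.Iic (a : ℝ)}) := by
  rw [← MeasurableSpace.comap_generateFrom, ← Real.borel_eq_generateFrom_Iic_rat,
    ← BorelSpace.measurable_eq (α := ℝ), he.comap_eq]

lemma ext_of_rat {Ω : Type*} [mΩ : MeasurableSpace Ω] {e : Ω → ℝ}
    (he : MeasurableEmbedding e) {μ ν : Measure Ω} [IsProbabilityMeasure μ]
    [IsProbabilityMeasure ν] (h : ∀ q : ℚ, μ (e ⁻¹' Set.Iic (q : ℝ)) = ν (e ⁻¹' Set.Iic (q : ℝ))) :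
    μ = ν := by
  refine ext_of_generate_finite _ (generateFrom_rat he) ?_ ?_ (by simp)
  · have := Real.isPiSystem_Iic_rat.comap e
    exact this
  · rintro s ⟨t, ht, rfl⟩
    simp only [Set.mem_iUnion, Set.mem_singleton_iff] at ht
    obtain ⟨q, rfl⟩ := ht
    exact h q

lemma exists_kernel_of_rat {α Ω : Type*} [MeasurableSpace α] [mΩ : MeasurableSpace Ω] {e : Ω → ℝ}
    (he : MeasurableEmbedding e) (ω₀ : Ω) (f : α → ℚ → ℝ) (hf : Measurable f) :
    ∃ π : α → Measure Ω, Measurable π ∧ (∀ a, IsProbabilityMeasure (π a)) ∧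
      ∀ a (ν : Measure Ω), IsProbabilityMeasure ν →
        (∀ q : ℚ, f a q = (ν (e ⁻¹' Set.Iic (q : ℝ))).toReal) → π a = ν := by
  classical
  set η : α → Measure ℝ := fun a => (ProbabilityTheory.stieltjesOfMeasurableRat f hf a).measure
    with hη
  have hηm : Measurable η := ProbabilityTheory.measurable_measure_stieltjesOfMeasurableRat hf
  have hηp : ∀ a, IsProbabilityMeasure (η a) := fun a =>
    ⟨ProbabilityTheory.measure_stieltjesOfMeasurableRat_univ hf a⟩
  refine ⟨fun a => if η a (Set.range e) = 1 then (η a).comap e else Measure.dirac ω₀,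
    ?_, ?_, ?_⟩
  · refine Measurable.ite ?_ ?_ measurable_const
    · exact (Measure.measurable_coe he.measurableSet_range).comp hηm (measurableSet_singleton 1)
    · refine Measure.measurable_of_measurable_coe _ fun s hs => ?_
      simp_rw [he.comap_apply]
      exact (Measure.measurable_coe (he.measurableSet_image.2 hs)).comp hηm
  · intro a
    dsimp only
    split_ifs with h
    · exact ⟨by rw [he.comap_apply, Set.image_univ, h]⟩
    · infer_instance
  · intro a ν hν h
    have hmap : IsProbabilityMeasure (ν.map e) :=
      Measure.isProbabilityMeasure_map he.measurable.aemeasurable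
    have hfc : ∀ q : ℚ, f a q = ProbabilityTheory.cdf (ν.map e) q := by
      intro q
      rw [h q, ProbabilityTheory.cdf_eq_real, measureReal_def, he.map_apply]
    have hst : ProbabilityTheory.IsRatStieltjesPoint f a := by
      have hfe : f a = fun q : ℚ => ProbabilityTheory.cdf (ν.map e) q := funext hfc
      refine ⟨?_, ?_, ?_, ?_⟩
      · rw [hfe]
        intro q r hqr
        exact ProbabilityTheory.monotone_cdf _ (by exact_mod_cast hqr)
      · rw [hfe]
        exact (ProbabilityTheory.tendsto_cdf_atTop _).comp (tendsto_ratCast_atTop_iff.2 tendsto_id)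
      · rw [hfe]
        exact (ProbabilityTheory.tendsto_cdf_atBot _).comp (tendsto_ratCast_atBot_iff.2 tendsto_id)
      · intro t
        rw [hfe]
        dsimp only
        rw [← StieltjesFunction.iInf_rat_gt_eq (ProbabilityTheory.cdf (ν.map e)) t]
        refine Equiv.iInf_congr (Equiv.subtypeEquivRight fun r => ?_) fun r => rfl
        simp
    have heq : η a = ν.map e := by
      refine ext_of_rat (e := id) MeasurableEmbedding.id fun q => ?_
      have : IsProbabilityMeasure (η a) := hηp a
      simp only [Set.preimage_id]
      rw [hη, ProbabilityTheory.measure_stieltjesOfMeasurableRat_Iic,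
        ProbabilityTheory.stieltjesOfMeasurableRat_eq,
        ProbabilityTheory.toRatCDF_of_isRatStieltjesPoint hst, hfc, ProbabilityTheory.ofReal_cdf]
    have h1 : η a (Set.range e) = 1 := by
      rw [heq, he.map_apply, Set.preimage_range, measure_univ]
    simp only [h1, if_true]
    rw [heq, he.comap_map]

section Backward

variable {Ω : Type*} {m0 : MeasurableSpace Ω} {μ : Measure Ω} [IsProbabilityMeasure μ]
  {F : ℕ → MeasurableSpace Ω} {X : ℕ → Ω → ℝ}

lemma bw_integrable (hle : ∀ n, F n ≤ m0) (hX : ∀ n, StronglyMeasurable[F n] (X n))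
    (h0 : ∀ n ω, 0 ≤ X n ω) (h1 : ∀ n ω, X n ω ≤ 1) (n : ℕ) : Integrable (X n) μ :=
  Integrable.of_bound ((hX n).mono (hle n)).aestronglyMeasurable 1
    (Eventually.of_forall fun ω => by
      rw [Real.norm_eq_abs, abs_le]; constructor <;> linarith [h0 n ω, h1 n ω])

lemma bw_integrable_mul (hle : ∀ n, F n ≤ m0) (hX : ∀ n, StronglyMeasurable[F n] (X n))
    (h0 : ∀ n ω, 0 ≤ X n ω) (h1 : ∀ n ω, X n ω ≤ 1) (n m : ℕ) : Integrable (X n * X m) μ :=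
  Integrable.of_bound
    (((hX n).mono (hle n)).mul ((hX m).mono (hle m))).aestronglyMeasurable 1
    (Eventually.of_forall fun ω => by
      rw [Real.norm_eq_abs, Pi.mul_apply, abs_mul]
      have ha : |X n ω| ≤ 1 := by rw [abs_le]; constructor <;> linarith [h0 n ω, h1 n ω]
      have hb : |X m ω| ≤ 1 := by rw [abs_le]; constructor <;> linarith [h0 m ω, h1 m ω]
      nlinarith [abs_nonneg (X n ω), abs_nonneg (X m ω)])

lemma bw_sq (hle : ∀ n, F n ≤ m0) (hX : ∀ n, StronglyMeasurable[F n] (X n))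
    (h0 : ∀ n ω, 0 ≤ X n ω) (h1 : ∀ n ω, X n ω ≤ 1)
    (hc : ∀ n m, n ≤ m → μ[X n | F m] =ᵐ[μ] X m) {n m : ℕ} (hnm : n ≤ m) :
    ∫ ω, (X n ω - X m ω) ^ 2 ∂μ = ∫ ω, X n ω * X n ω ∂μ - ∫ ω, X m ω * X m ω ∂μ := by
  have hi := bw_integrable_mul (μ := μ) hle hX h0 h1
  have hcross : ∫ ω, X n ω * X m ω ∂μ = ∫ ω, X m ω * X m ω ∂μ := by
    have h2 : μ[X n * X m | F m] =ᵐ[μ] μ[X n | F m] * X m :=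
      condExp_mul_of_stronglyMeasurable_right (hX m) (hi n m) (bw_integrable hle hX h0 h1 n)
    have h3 : ∫ ω, (μ[X n * X m | F m]) ω ∂μ = ∫ ω, X m ω * X m ω ∂μ := by
      refine integral_congr_ae ?_
      filter_upwards [h2, hc n m hnm] with ω ha hb
      rw [ha, Pi.mul_apply, hb]
    rw [integral_condExp (hle m)] at h3
    exact h3
  have : ∀ ω, (X n ω - X m ω) ^ 2 = (X n ω * X n ω - X n ω * X m ω) - (X n ω * X m ω - X m ω * X m ω) :=
    fun ω => by ring
  simp_rw [this]
  rw [integral_sub, integral_sub, integral_sub, hcross]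
  · ring
  · exact hi n m
  · exact hi m m
  · exact hi n n
  · exact hi n m
  · exact (hi n n).sub (hi n m)
  · exact (hi n m).sub (hi m m)

lemma bw_max (hF : Antitone F) (hle : ∀ n, F n ≤ m0) (hX : ∀ n, StronglyMeasurable[F n] (X n))
    (h0 : ∀ n ω, 0 ≤ X n ω) (h1 : ∀ n ω, X n ω ≤ 1)
    (hc : ∀ n m, n ≤ m → μ[X n | F m] =ᵐ[μ] X m) {n m : ℕ} (hnm : n ≤ m) (ε : ℝ≥0) :
    ε * μ {ω | ∃ k, n ≤ k ∧ k ≤ m ∧ (ε : ℝ) ≤ |X k ω - X m ω|}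
      ≤ ENNReal.ofReal (∫ ω, |X n ω - X m ω| ∂μ) := by
  let 𝒢 : Filtration ℕ m0 :=
    ⟨fun k => F (m - k), fun i j hij => hF (Nat.sub_le_sub_left hij m), fun i => hle _⟩
  have hint := bw_integrable (μ := μ) hle hX h0 h1
  have hmart : Martingale (fun k => X (m - k) - X m) 𝒢 μ := by
    refine ⟨fun k => ?_, fun i j hij => ?_⟩
    · exact (hX (m - k)).sub ((hX m).mono (hF (Nat.sub_le m k)))
    · have hs : μ[X (m - j) - X m | F (m - i)] =ᵐ[μ] μ[X (m - j) | F (m - i)] - μ[X m | F (m - i)] :=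
        condExp_sub (hint _) (hint _) _
      have hm : μ[X m | F (m - i)] = X m :=
        condExp_of_stronglyMeasurable (hle _) ((hX m).mono (hF (Nat.sub_le m i))) (hint _)
      have h3 := hc (m - j) (m - i) (Nat.sub_le_sub_left hij m)
      filter_upwards [hs, h3] with ω ha hb
      change (μ[X (m - j) - X m | F (m - i)]) ω = _
      rw [ha, Pi.sub_apply, hb, hm, Pi.sub_apply]
  have hsub := hmart.submartingale.sup hmart.neg.submartingale
  have hpos : (0 : ℕ → Ω → ℝ) ≤ (fun k => X (m - k) - X m) ⊔ -(fun k => X (m - k) - X m) := by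
    intro k ω
    exact abs_nonneg (X (m - k) ω - X m ω)
  have hmax := maximal_ineq hsub hpos (ε := ε) (m - n)
  have hsubset : {ω | ∃ k, n ≤ k ∧ k ≤ m ∧ (ε : ℝ) ≤ |X k ω - X m ω|} ⊆
      {ω | (ε : ℝ) ≤ (Finset.range (m - n + 1)).sup' Finset.nonempty_range_add_one fun k =>
        ((fun k => X (m - k) - X m) ⊔ -(fun k => X (m - k) - X m)) k ω} := by
    rintro ω ⟨k, hnk, hkm, hk⟩
    refine le_trans hk ?_
    have hmem : m - k ∈ Finset.range (m - n + 1) := by rw [Finset.mem_range]; omega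
    refine le_trans ?_ (Finset.le_sup' (fun k =>
        ((fun k => X (m - k) - X m) ⊔ -(fun k => X (m - k) - X m)) k ω) hmem)
    change _ ≤ |X (m - (m - k)) ω - X m ω|
    rw [Nat.sub_sub_self hkm]
  refine le_trans (mul_le_mul_right (measure_mono hsubset) _) (hmax.trans ?_)
  refine ENNReal.ofReal_le_ofReal ?_
  have hlast : ∀ ω, ((fun k => X (m - k) - X m) ⊔ -(fun k => X (m - k) - X m)) (m - n) ω
      = |X n ω - X m ω| := by
    intro ω
    change |X (m - (m - n)) ω - X m ω| = _
    rw [Nat.sub_sub_self hnm]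
  simp_rw [hlast]
  exact setIntegral_le_integral ((hint n).sub (hint m)).abs
    (Eventually.of_forall fun ω => abs_nonneg _)

lemma bw_small (hF : Antitone F) (hle : ∀ n, F n ≤ m0) (hX : ∀ n, StronglyMeasurable[F n] (X n))
    (h0 : ∀ n ω, 0 ≤ X n ω) (h1 : ∀ n ω, X n ω ≤ 1)
    (hc : ∀ n m, n ≤ m → μ[X n | F m] =ᵐ[μ] X m) (δ : ℝ) (hδ : 0 < δ) :
    ∃ n, ∀ m, n ≤ m → ∫ ω, |X n ω - X m ω| ∂μ ≤ 2 * δ := by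
  have hint := bw_integrable (μ := μ) hle hX h0 h1
  set a : ℕ → ℝ := fun n => ∫ ω, X n ω * X n ω ∂μ with ha
  have hanti : Antitone a := by
    intro n m hnm
    have := bw_sq hle hX h0 h1 hc hnm
    have h2 : 0 ≤ ∫ ω, (X n ω - X m ω) ^ 2 ∂μ := integral_nonneg fun ω => sq_nonneg _
    simp only [ha]; linarith
  have hbdd : BddBelow (Set.range a) :=
    ⟨0, by rintro _ ⟨n, rfl⟩; exact integral_nonneg fun ω => mul_self_nonneg _⟩
  have hlim := tendsto_atTop_ciInf hanti hbdd
  obtain ⟨n, hn⟩ := (hlim.eventually (gt_mem_nhds (lt_add_of_pos_right _ (mul_pos hδ hδ)))).exists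
  refine ⟨n, fun m hnm => ?_⟩
  have hsq : ∫ ω, (X n ω - X m ω) ^ 2 ∂μ ≤ δ * δ := by
    rw [bw_sq hle hX h0 h1 hc hnm]
    have := ciInf_le hbdd m
    simp only [ha] at this hn ⊢
    linarith
  have hi2 : Integrable (fun ω => (X n ω - X m ω) ^ 2) μ := by
    have hi := bw_integrable_mul (μ := μ) hle hX h0 h1
    refine (((hi n n).sub (hi n m)).sub ((hi n m).sub (hi m m))).congr
      (Eventually.of_forall fun ω => ?_)
    simp only [Pi.sub_apply, Pi.mul_apply]; ring
  have hle2 : ∫ ω, |X n ω - X m ω| ∂μ ≤ ∫ ω, (δ + δ⁻¹ * (X n ω - X m ω) ^ 2) ∂μ := by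
    refine integral_mono ((hint n).sub (hint m)).abs
      ((integrable_const δ).add (hi2.const_mul _)) fun ω => ?_
    dsimp only
    set z := X n ω - X m ω
    rw [← sq_abs z]
    have hz := abs_nonneg z
    rw [← mul_le_mul_iff_right₀ hδ]
    have : δ * (δ + δ⁻¹ * |z| ^ 2) = δ * δ + |z| ^ 2 := by field_simp
    rw [this]
    nlinarith [sq_nonneg (δ - |z|), mul_nonneg hδ.le hz]
  refine hle2.trans ?_
  rw [integral_add (integrable_const δ) (hi2.const_mul _), integral_const_mul]
  simp only [integral_const, probReal_univ, one_smul]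
  have : δ⁻¹ * ∫ ω, (X n ω - X m ω) ^ 2 ∂μ ≤ δ⁻¹ * (δ * δ) :=
    mul_le_mul_of_nonneg_left hsq (inv_nonneg.2 hδ.le)
  have h3 : δ⁻¹ * (δ * δ) = δ := by field_simp
  linarith

lemma bw_null (hF : Antitone F) (hle : ∀ n, F n ≤ m0) (hX : ∀ n, StronglyMeasurable[F n] (X n))
    (h0 : ∀ n ω, 0 ≤ X n ω) (h1 : ∀ n ω, X n ω ≤ 1)
    (hc : ∀ n m, n ≤ m → μ[X n | F m] =ᵐ[μ] X m) (ε : ℝ≥0) (hε : 0 < ε) :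
    ∀ᵐ ω ∂μ, ∃ n, ∀ k, n ≤ k → ∀ j, n ≤ j → |X k ω - X j ω| < 2 * ε := by
  rw [ae_iff]
  refine le_antisymm (ENNReal.le_of_forall_pos_le_add fun η hη _ => ?_) zero_le
  rw [zero_add]
  obtain ⟨n, hn⟩ := bw_small (μ := μ) hF hle hX h0 h1 hc (ε * η / 2) (by positivity)
  have hmono : Monotone fun M : ℕ =>
      {ω | ∃ k j, n ≤ k ∧ k ≤ M ∧ n ≤ j ∧ j ≤ M ∧ 2 * (ε : ℝ) ≤ |X k ω - X j ω|} := by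
    rintro M M' hM ω ⟨k, j, a, b, c, d, h⟩
    exact ⟨k, j, a, b.trans hM, c, d.trans hM, h⟩
  have hsub : {ω | ¬ ∃ n, ∀ k, n ≤ k → ∀ j, n ≤ j → |X k ω - X j ω| < 2 * ε} ⊆
      ⋃ M : ℕ, {ω | ∃ k j, n ≤ k ∧ k ≤ M ∧ n ≤ j ∧ j ≤ M ∧ 2 * (ε : ℝ) ≤ |X k ω - X j ω|} := by
    intro ω hω
    simp only [Set.mem_setOf_eq, not_exists, not_forall, not_lt] at hω
    obtain ⟨k, hk, j, hj, h⟩ := hω n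
    exact Set.mem_iUnion.2 ⟨max k j, k, j, hk, le_max_left _ _, hj, le_max_right _ _, h⟩
  refine (measure_mono hsub).trans ?_
  rw [hmono.measure_iUnion]
  refine iSup_le fun M => ?_
  by_cases hM : n ≤ M
  · have h2 : {ω | ∃ k j, n ≤ k ∧ k ≤ M ∧ n ≤ j ∧ j ≤ M ∧ 2 * (ε : ℝ) ≤ |X k ω - X j ω|} ⊆
        {ω | ∃ k, n ≤ k ∧ k ≤ M ∧ (ε : ℝ) ≤ |X k ω - X M ω|} := by
      rintro ω ⟨k, j, a, b, c, d, h⟩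
      by_contra hcon
      simp only [Set.mem_setOf_eq, not_exists, not_and, not_le] at hcon
      have e1 := hcon k a b
      have e2 := hcon j c d
      rw [abs_lt] at e1 e2
      have : |X k ω - X j ω| < 2 * ε := by rw [abs_lt]; constructor <;> linarith
      linarith
    refine (measure_mono h2).trans ?_
    have h3 := bw_max (μ := μ) hF hle hX h0 h1 hc hM ε
    have h4 : ENNReal.ofReal (∫ ω, |X n ω - X M ω| ∂μ) ≤ ε * η := by
      refine (ENNReal.ofReal_le_ofReal (hn M hM)).trans ?_
      rw [show 2 * ((ε : ℝ) * η / 2) = ((ε * η : ℝ≥0) : ℝ) by push_cast; ring,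
        ENNReal.ofReal_coe_nnreal, ENNReal.coe_mul]
    exact (ENNReal.mul_le_mul_iff_right (by exact_mod_cast hε.ne') ENNReal.coe_ne_top).1
      (h3.trans h4)
  · have : {ω | ∃ k j, n ≤ k ∧ k ≤ M ∧ n ≤ j ∧ j ≤ M ∧ 2 * (ε : ℝ) ≤ |X k ω - X j ω|} = ∅ := by
      ext ω
      simp only [Set.mem_setOf_eq, Set.mem_empty_iff_false, iff_false]
      rintro ⟨k, j, a, b, -⟩
      exact hM (a.trans b)
    rw [this]; simp

lemma bw_tendsto (hF : Antitone F) (hle : ∀ n, F n ≤ m0) (hX : ∀ n, StronglyMeasurable[F n] (X n))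
    (h0 : ∀ n ω, 0 ≤ X n ω) (h1 : ∀ n ω, X n ω ≤ 1)
    (hc : ∀ n m, n ≤ m → μ[X n | F m] =ᵐ[μ] X m) :
    ∀ᵐ ω ∂μ, ∃ l, Tendsto (fun n => X n ω) atTop (𝓝 l) := by
  have h : ∀ᵐ ω ∂μ, ∀ i : ℕ, ∃ n, ∀ k, n ≤ k → ∀ j, n ≤ j →
      |X k ω - X j ω| < 2 * (((1 : ℝ≥0) / (i + 1) : ℝ≥0) : ℝ) :=
    ae_all_iff.2 fun i => bw_null hF hle hX h0 h1 hc _ (by positivity)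
  filter_upwards [h] with ω hω
  refine cauchySeq_tendsto_of_complete (Metric.cauchySeq_iff.2 fun ε hε => ?_)
  obtain ⟨i, hi⟩ := exists_nat_one_div_lt (half_pos hε)
  obtain ⟨n, hn⟩ := hω i
  refine ⟨n, fun k hk j hj => ?_⟩
  rw [Real.dist_eq]
  have := hn k hk j hj
  push_cast at this
  linarith

end Backward

section GibbsLemmas

variable [mE : MeasurableSpace E] {γ : Finset S → (S → E) → Measure (S → E)}
  {μ : Measure (S → E)}

lemma gibbs_set (hγ : IsSpecification γ) (hμ : μ ∈ Gibbs γ) (Λ : Finset S) {A B : Set (S → E)}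
    (hA : MeasurableSet A) (hB : MeasurableSet[cylSigma S E ((↑Λ : Set S)ᶜ)] B) :
    ∫⁻ ω in B, γ Λ ω A ∂μ = μ (A ∩ B) := by
  have hB' : MeasurableSet B := cylSigma_le _ _ hB
  rw [← hμ.2 Λ (A ∩ B) (hA.inter hB'), ← lintegral_indicator hB']
  refine lintegral_congr fun ω => ?_
  have hp := hγ.proper Λ B hB ω
  have := hγ.prob Λ ω
  by_cases hω : ω ∈ B
  · rw [Set.indicator_of_mem hω] at hp ⊢
    have hae : ∀ᵐ σ ∂(γ Λ ω), σ ∈ B := (prob_compl_eq_zero_iff hB').2 hp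
    refine measure_congr ?_
    filter_upwards [hae] with σ hσ
    exact propext ⟨fun h => ⟨h, hσ⟩, fun h => h.1⟩
  · rw [Set.indicator_of_notMem hω] at hp ⊢
    exact (measure_mono_null Set.inter_subset_right hp).symm

lemma spec_meas (hγ : IsSpecification γ) (Λ : Finset S) {A : Set (S → E)}
    (hA : MeasurableSet A) : Measurable fun ω => γ Λ ω A :=
  (hγ.meas Λ A hA).mono (cylSigma_le _) le_rfl

/-- A `[0,1]`-valued `m`-measurable function with the right set integrals is the conditional
probability. -/
lemma toReal_ae_eq_condExp {Ω : Type*} {m m0 : MeasurableSpace Ω} (hm : m ≤ m0) {μ : Measure Ω}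
    [IsProbabilityMeasure μ] {g : Ω → ℝ≥0∞} (hg : Measurable[m] g) (hg1 : ∀ ω, g ω ≤ 1)
    {A : Set Ω} (hA : MeasurableSet A)
    (h : ∀ B, MeasurableSet[m] B → ∫⁻ ω in B, g ω ∂μ = μ (A ∩ B)) :
    (fun ω => (g ω).toReal) =ᵐ[μ] μ[A.indicator (fun _ => (1 : ℝ)) | m] := by
  have hint : Integrable (fun ω => (g ω).toReal) μ :=
    Integrable.of_bound (hg.mono hm le_rfl).ennreal_toReal.aestronglyMeasurable 1
      (Eventually.of_forall fun ω => by
        rw [Real.norm_eq_abs, abs_of_nonneg ENNReal.toReal_nonneg]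
        exact ENNReal.toReal_mono ENNReal.one_ne_top (hg1 ω))
  refine ae_eq_condExp_of_forall_setIntegral_eq hm
    ((integrable_const (1 : ℝ)).indicator hA) (fun s _ _ => hint.integrableOn) ?_
    (Measurable.stronglyMeasurable hg.ennreal_toReal).aestronglyMeasurable
  intro B hB _
  rw [integral_toReal (hg.mono hm le_rfl).aemeasurable
    (Eventually.of_forall fun ω => (hg1 ω).trans_lt ENNReal.one_lt_top), h B hB,
    integral_indicator hA, setIntegral_const]
  simp [measureReal_def, Measure.restrict_apply hA]

lemma gamma_ae_eq (hγ : IsSpecification γ) (hμ : μ ∈ Gibbs γ) (Λ : Finset S) {A : Set (S → E)}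
    (hA : MeasurableSet A) :
    (fun ω => (γ Λ ω A).toReal)
      =ᵐ[μ] μ[A.indicator (fun _ => (1 : ℝ)) | cylSigma S E ((↑Λ : Set S)ᶜ)] := by
  have := hμ.1
  exact toReal_ae_eq_condExp (cylSigma_le _) (hγ.meas Λ A hA)
    (fun ω => have := hγ.prob Λ ω; prob_le_one) hA fun B hB => gibbs_set hγ hμ Λ hA hB

lemma gamma_tendsto (hγ : IsSpecification γ) (hμ : μ ∈ Gibbs γ) {L : ℕ → Finset S}
    (hLm : Monotone L) {A : Set (S → E)} (hA : MeasurableSet A) :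
    ∀ᵐ ω ∂μ, Tendsto (fun n => γ (L n) ω A) atTop
      (𝓝 (limsup (fun n => γ (L n) ω A) atTop)) := by
  have := hμ.1
  have hp := hγ.prob
  have hfin : ∀ Λ ω, γ Λ ω A ≠ ∞ := fun Λ ω => measure_ne_top _ _
  have key := bw_tendsto (μ := μ) (F := fun n => cylSigma S E ((↑(L n) : Set S)ᶜ))
    (X := fun n ω => (γ (L n) ω A).toReal)
    (fun i j hij => cylSigma_compl_anti (hLm hij)) (fun n => cylSigma_le _)
    (fun n => Measurable.stronglyMeasurable (hγ.meas (L n) A hA).ennreal_toReal)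
    (fun n ω => ENNReal.toReal_nonneg)
    (fun n ω => ENNReal.toReal_mono ENNReal.one_ne_top prob_le_one)
    (fun n m hnm => by
      have h1 := gamma_ae_eq hγ hμ (L n) hA
      have h2 := gamma_ae_eq hγ hμ (L m) hA
      refine (condExp_congr_ae h1).trans (EventuallyEq.trans ?_ h2.symm)
      exact condExp_condExp_of_le (cylSigma_compl_anti (hLm hnm)) (cylSigma_le _))
  filter_upwards [key] with ω ⟨l, hl⟩
  have h2 : Tendsto (fun n => γ (L n) ω A) atTop (𝓝 (ENNReal.ofReal l)) := by
    have := ENNReal.tendsto_ofReal hl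
    simpa only [ENNReal.ofReal_toReal (hfin _ _)] using this
  rw [h2.limsup_eq]
  exact h2

lemma limsup_le_one' (hγ : IsSpecification γ) (L : ℕ → Finset S) (A : Set (S → E)) (ω : S → E) :
    limsup (fun n => γ (L n) ω A) atTop ≤ 1 :=
  limsup_le_of_le (h := Eventually.of_forall fun n => have := hγ.prob (L n) ω; prob_le_one)

lemma limsup_ae_eq (hγ : IsSpecification γ) (hμ : μ ∈ Gibbs γ) {L : ℕ → Finset S}
    (hLm : Monotone L) {A : Set (S → E)} (hA : MeasurableSet A)
    (hmeas : Measurable[tailSigma S E] fun ω => limsup (fun n => γ (L n) ω A) atTop) :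
    (fun ω => (limsup (fun n => γ (L n) ω A) atTop).toReal)
      =ᵐ[μ] μ[A.indicator (fun _ => (1 : ℝ)) | tailSigma S E] := by
  have := hμ.1
  refine toReal_ae_eq_condExp tailSigma_le hmeas (limsup_le_one' hγ L A) hA fun B hB => ?_
  have h1 : Tendsto (fun n => ∫⁻ ω in B, γ (L n) ω A ∂μ) atTop
      (𝓝 (∫⁻ ω in B, limsup (fun n => γ (L n) ω A) atTop ∂μ)) := by
    refine tendsto_lintegral_of_dominated_convergence (fun _ => 1)
      (fun n => spec_meas hγ (L n) hA) (fun n => Eventually.of_forall fun ω => ?_) (by simp)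
      (ae_restrict_of_ae (gamma_tendsto hγ hμ hLm hA))
    have := hγ.prob (L n) ω
    exact prob_le_one
  have h2 : ∀ n, ∫⁻ ω in B, γ (L n) ω A ∂μ = μ (A ∩ B) := fun n =>
    gibbs_set hγ hμ (L n) hA (tailSigma_le_cyl _ _ hB)
  simp_rw [h2] at h1
  exact tendsto_nhds_unique h1 tendsto_const_nhds

lemma mem_gibbs_of_rat (hγ : IsSpecification γ) {e : (S → E) → ℝ} (he : MeasurableEmbedding e)
    [IsProbabilityMeasure μ]
    (h : ∀ (Λ : Finset S) (q : ℚ), ∫⁻ ω, γ Λ ω (e ⁻¹' Set.Iic (q : ℝ)) ∂μ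
      = μ (e ⁻¹' Set.Iic (q : ℝ))) : μ ∈ Gibbs γ := by
  refine ⟨inferInstance, fun Λ A hA => ?_⟩
  have hm : Measurable (γ Λ) := Measure.measurable_of_measurable_coe _ fun s hs => spec_meas hγ Λ hs
  have hb : ∀ A, MeasurableSet A → μ.bind (γ Λ) A = ∫⁻ ω, γ Λ ω A ∂μ := fun A hA =>
    Measure.bind_apply hA hm.aemeasurable
  have hp : IsProbabilityMeasure (μ.bind (γ Λ)) := ⟨by
    rw [hb _ .univ]
    have : ∀ ω, γ Λ ω Set.univ = 1 := fun ω => (hγ.prob Λ ω).measure_univ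
    simp [this]⟩
  have heq : μ.bind (γ Λ) = μ := ext_of_rat he fun q => by
    rw [hb _ (he.measurable measurableSet_Iic), h]
  rw [← hb A hA, heq]

variable [Countable S] [StandardBorelSpace E]

lemma isGTKernel_of (hγ : IsSpecification γ) {L : ℕ → Finset S} (hLm : Monotone L)
    {e : (S → E) → ℝ} (he : MeasurableEmbedding e)
    {π : (S → E) → Measure (S → E)} (hprob : ∀ ω, IsProbabilityMeasure (π ω))
    (htail : ∀ A : Set (S → E), MeasurableSet A → Measurable[tailSigma S E] fun ω => π ω A)
    (hlim : ∀ q : ℚ, Measurable[tailSigma S E]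
      fun ω => limsup (fun n => γ (L n) ω (e ⁻¹' Set.Iic (q : ℝ))) atTop)
    (hπ : ∀ ω (ν : Measure (S → E)), IsProbabilityMeasure ν →
      (∀ q : ℚ, (limsup (fun n => γ (L n) ω (e ⁻¹' Set.Iic (q : ℝ))) atTop).toReal
        = (ν (e ⁻¹' Set.Iic (q : ℝ))).toReal) → π ω = ν) :
    IsGTKernel γ π := by
  have hC : ∀ q : ℚ, MeasurableSet (e ⁻¹' Set.Iic (q : ℝ)) := fun q =>
    he.measurable measurableSet_Iic
  have hπm : Measurable[tailSigma S E] π := by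
    refine @Measure.measurable_of_measurable_coe _ _ _ (tailSigma S E) _ htail
  have hset : {ω | π ω ∈ Gibbs γ} = ⋂ Λ : Finset S, ⋂ q : ℚ,
      {ω | ∫⁻ σ, γ Λ σ (e ⁻¹' Set.Iic (q : ℝ)) ∂(π ω) = π ω (e ⁻¹' Set.Iic (q : ℝ))} := by
    ext ω
    simp only [Set.mem_iInter, Set.mem_setOf_eq]
    exact ⟨fun h Λ q => h.2 Λ _ (hC q), fun h => have := hprob ω; mem_gibbs_of_rat hγ he h⟩
  have hsetm : MeasurableSet[tailSigma S E] {ω | π ω ∈ Gibbs γ} := by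
    rw [hset]
    refine MeasurableSet.iInter fun Λ => MeasurableSet.iInter fun q => ?_
    refine measurableSet_eq_fun (m := tailSigma S E) ?_ (htail _ (hC q))
    exact (Measure.measurable_lintegral (spec_meas hγ Λ (hC q))).comp hπm
  -- a.e. equality with the regular conditional probability
  have hae : ∀ μ ∈ Gibbs γ, ∀ A, MeasurableSet A →
      (fun ω => (π ω A).toReal) =ᵐ[μ] μ[A.indicator (fun _ => (1 : ℝ)) | tailSigma S E] ∧
      (∀ Λ, (fun ω => (∫⁻ σ, γ Λ σ A ∂(π ω)).toReal) =ᵐ[μ]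
        μ[A.indicator (fun _ => (1 : ℝ)) | tailSigma S E]) := by
    intro μ hμ A hA
    have hμp := hμ.1
    have hk : ∀ᵐ ω ∂μ, π ω = ProbabilityTheory.condExpKernel μ (tailSigma S E) ω := by
      have h1 : ∀ᵐ ω ∂μ, ∀ q : ℚ,
          (limsup (fun n => γ (L n) ω (e ⁻¹' Set.Iic (q : ℝ))) atTop).toReal
          = (ProbabilityTheory.condExpKernel μ (tailSigma S E) ω (e ⁻¹' Set.Iic (q : ℝ))).toReal := by
        refine ae_all_iff.2 fun q => ?_
        exact (limsup_ae_eq hγ hμ hLm (hC q) (hlim q)).trans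
          (ProbabilityTheory.condExpKernel_ae_eq_condExp tailSigma_le (hC q)).symm
      filter_upwards [h1] with ω hω
      exact hπ ω _ inferInstance hω
    constructor
    · refine EventuallyEq.trans ?_
        (ProbabilityTheory.condExpKernel_ae_eq_condExp (μ := μ) tailSigma_le hA)
      filter_upwards [hk] with ω hω
      rw [hω]; rfl
    · intro Λ
      have hfi : Integrable (fun ω => (γ Λ ω A).toReal) μ :=
        integrable_condExp.congr (gamma_ae_eq hγ hμ Λ hA).symm
      have h2 := ProbabilityTheory.condExp_ae_eq_integral_condExpKernel tailSigma_le hfi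
      have h3 : μ[fun ω => (γ Λ ω A).toReal | tailSigma S E] =ᵐ[μ]
          μ[A.indicator (fun _ => (1 : ℝ)) | tailSigma S E] :=
        (condExp_congr_ae (gamma_ae_eq hγ hμ Λ hA)).trans
          (condExp_condExp_of_le (tailSigma_le_cyl _) (cylSigma_le _))
      refine EventuallyEq.trans ?_ (h2.symm.trans h3)
      filter_upwards [hk] with ω hω
      rw [← hω, integral_toReal (spec_meas hγ Λ hA).aemeasurable]
      exact Eventually.of_forall fun σ => have := hγ.prob Λ σ; measure_lt_top _ _
  refine ⟨hprob, htail, ?_, hsetm, ?_⟩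
  · intro μ hμ A hA B hB
    have hμp := hμ.1
    have hi : ∫ ω in B, (π ω A).toReal ∂μ = μ.real (A ∩ B) := by
      rw [setIntegral_congr_ae (g := μ[A.indicator (fun _ => (1 : ℝ)) | tailSigma S E])
        (tailSigma_le _ hB) ((hae μ hμ A hA).1.mono fun ω h _ => h),
        setIntegral_condExp tailSigma_le ((integrable_const (1 : ℝ)).indicator hA) hB,
        integral_indicator hA, setIntegral_const]
      simp [measureReal_def, Measure.restrict_apply hA]
    have hle : ∀ ω, π ω A ≤ 1 := fun ω => have := hprob ω; prob_le_one
    rw [integral_toReal ((htail A hA).mono tailSigma_le le_rfl).aemeasurable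
      (Eventually.of_forall fun ω => (hle ω).trans_lt ENNReal.one_lt_top), measureReal_def,
      ENNReal.toReal_eq_toReal_iff' ?_ (measure_ne_top _ _)] at hi
    · exact hi
    · refine ((lintegral_mono hle).trans_lt ?_).ne
      simp
  · intro μ hμ
    have hμp := hμ.1
    rw [← prob_compl_eq_zero_iff (tailSigma_le _ hsetm)]
    change ∀ᵐ ω ∂μ, π ω ∈ Gibbs γ
    have : ∀ᵐ ω ∂μ, ∀ (Λ : Finset S) (q : ℚ),
        ∫⁻ σ, γ Λ σ (e ⁻¹' Set.Iic (q : ℝ)) ∂(π ω) = π ω (e ⁻¹' Set.Iic (q : ℝ)) := by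
      refine ae_all_iff.2 fun Λ => ae_all_iff.2 fun q => ?_
      obtain ⟨h1, h2⟩ := hae μ hμ _ (hC q)
      filter_upwards [h1, h2 Λ] with ω ha hb
      have := hprob ω
      refine (ENNReal.toReal_eq_toReal_iff' ?_ (measure_ne_top _ _)).1 (hb.trans ha.symm)
      refine ((lintegral_mono (g := fun _ => 1) fun σ => ?_).trans_lt ?_).ne
      · have := hγ.prob Λ σ; exact prob_le_one
      · simp
    filter_upwards [this] with ω hω
    have := hprob ω
    exact mem_gibbs_of_rat hγ he hω

end GibbsLemmas

/-- **Proposition (random `(𝒢(γ[ξ]), 𝒯)`-kernel).** For a random specification with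
`𝒢(γ[ξ]) ≠ ∅` for `ℙ`-a.e. `ξ`, there is a kernel `π[ξ](·|ω)` which is
`⋂_Λ (ℋ ⊗ ℱ_{Λᶜ})`-measurable in `(ξ, ω)` at every fixed measurable set, and such that
for `ℙ`-a.e. `ξ`, `π[ξ]` is a `(𝒢(γ[ξ]), 𝒯)`-kernel. -/
theorem exists_random_GT_kernel
    [Countable S] [MeasurableSpace E] [StandardBorelSpace E] [MeasurableSpace H]
    (ℙ : Measure H) [IsProbabilityMeasure ℙ]
    (γ : H → Finset S → (S → E) → Measure (S → E))
    (hγ : IsRandomSpecification γ)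
    (hGnonempty : ∀ᵐ ξ ∂ℙ, (Gibbs (γ ξ)).Nonempty) :
    ∃ π : H → (S → E) → Measure (S → E),
      -- (1) measurability w.r.t. `⋂_Λ (ℋ ⊗ ℱ_{Λᶜ})`
      (∀ A : Set (S → E), MeasurableSet A →
        Measurable[⨅ Λ : Finset S,
            MeasurableSpace.prod (inferInstance : MeasurableSpace H)
              (cylSigma S E ((↑Λ : Set S)ᶜ))]
          fun p : H × (S → E) => π p.1 p.2 A) ∧
      -- (2) for `ℙ`-a.e. `ξ`: `π[ξ](·|ω)` is a probability measure for every `ω`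
      -- and `π[ξ]` is a `(𝒢(γ[ξ]), 𝒯)`-kernel
      (∀ᵐ ξ ∂ℙ, (∀ ω, IsProbabilityMeasure (π ξ ω)) ∧ IsGTKernel (γ ξ) (π ξ)) := by
  classical
  obtain ⟨L, hLm, hL⟩ := exists_seq_monotone_tendsto_atTop_atTop (Finset S)
  obtain ⟨ξ₀, μ₀, hμ₀⟩ := hGnonempty.exists
  have hne : Nonempty (S → E) := by
    have := hμ₀.1
    exact nonempty_of_isProbabilityMeasure μ₀
  obtain ⟨c⟩ := hne
  set e := embeddingReal (S → E) with he_def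
  have he : MeasurableEmbedding e := measurableEmbedding_embeddingReal (S → E)
  have hC : ∀ q : ℚ, MeasurableSet (e ⁻¹' Set.Iic (q : ℝ)) := fun q =>
    he.measurable measurableSet_Iic
  let mT : MeasurableSpace (H × (S → E)) := ⨅ Λ : Finset S,
    MeasurableSpace.prod (inferInstance : MeasurableSpace H) (cylSigma S E ((↑Λ : Set S)ᶜ))
  let f : H × (S → E) → ℚ → ℝ := fun p q =>
    (limsup (fun n => γ p.1 (L n) p.2 (e ⁻¹' Set.Iic (q : ℝ))) atTop).toReal
  have hlim : ∀ q : ℚ, Measurable[mT] fun p : H × (S → E) =>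
      limsup (fun n => γ p.1 (L n) p.2 (e ⁻¹' Set.Iic (q : ℝ))) atTop := fun q =>
    limsup_meas c hγ hL (hC q)
  have hf : Measurable[mT] f := by
    refine @measurable_pi_lambda _ _ _ mT _ _ fun q => ?_
    exact (hlim q).ennreal_toReal
  have hsec : ∀ (ξ : H) (g : H × (S → E) → ℝ≥0∞), Measurable[mT] g →
      Measurable[tailSigma S E] fun ω => g (ξ, ω) := by
    intro ξ g hg
    refine measurable_iInf_iff'.2 fun Λ => ?_
    have hg' := measurable_iInf_iff'.1 hg Λ
    exact hg'.comp (@measurable_prodMk_left _ _ _ (cylSigma S E ((↑Λ : Set S)ᶜ)) ξ)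
  obtain ⟨π, hπm, hπp, hπ⟩ := @exists_kernel_of_rat _ _ mT _ e he c f hf
  have hπA : ∀ A : Set (S → E), MeasurableSet A → Measurable[mT] fun p => π p A := fun A hA =>
    (Measure.measurable_coe hA).comp hπm
  refine ⟨fun ξ ω => π (ξ, ω), hπA, Eventually.of_forall fun ξ => ⟨fun ω => hπp _, ?_⟩⟩
  exact isGTKernel_of (hγ.spec ξ) hLm he (fun ω => hπp _) (fun A hA => hsec ξ _ (hπA A hA))
    (fun q => hsec ξ _ (hlim q)) (fun ω ν hν h => hπ (ξ, ω) ν hν h)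

end GibbsMeta
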